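/- Over {a<b<c}, the word w = a b^{11} c b a b c b^5 is M-equivalent to b^i a b^{11−2i} c b a b^{1+2i} c b^{5−i} for every 0 ≤ i ≤ 5, and any two distinct words among these six have Hamming distance at least 7. -/

import Mathlib

open List

/-- Number of occurrences of `v` as a scattered subsequence of `w`. -/
def scount {α : Type*} [DecidableEq α] (w v : List α) : ℕ := w.sublists.count v

/-- The ternary ordered alphabet {a < b < c}. -/
inductive ABC | a | b | c
deriving DecidableEq

open ABC

/-- M-equivalence over the ordered alphabet {a < b < c}. -/
def MEq3 (w w' : List ABC) : Prop :=
  scount w [a] = scount w' [a] ∧ scount w [b] = scount w' [b] ∧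
  scount w [c] = scount w' [c] ∧ scount w [a, b] = scount w' [a, b] ∧
  scount w [b, c] = scount w' [b, c] ∧ scount w [a, b, c] = scount w' [a, b, c]

/-- Projection onto {a, c}: erase all b's. -/
def projAC (w : List ABC) : List ABC := w.filter (· ≠ b)

abbrev A (k : ℕ) : List ABC := List.replicate k a
abbrev B (k : ℕ) : List ABC := List.replicate k b
abbrev C (k : ℕ) : List ABC := List.replicate k c

/-- Hamming distance between two (equal-length) words. -/
def dH {α : Type*} [DecidableEq α] (w w' : List α) : ℕ :=
  (w.zip w').countP fun p => p.1 ≠ p.2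

/-- The family `b^i a b^{11-2i} c b a b^{1+2i} c b^{5-i}`. -/
def fam (i : ℕ) : List ABC :=
  B i ++ [a] ++ B (11 - 2 * i) ++ [c, b, a] ++ B (1 + 2 * i) ++ [c] ++ B (5 - i)

def rcount : List ABC → List ABC → ℕ
  | _, [] => 1
  | [], _ :: _ => 0
  | x :: w, y :: v => rcount w (y :: v) + if x = y then rcount w v else 0

theorem count_map_cons_ne (x y : ABC) (h : x ≠ y) (v : List ABC) (L : List (List ABC)) :
    (L.map (List.cons x)).count (y :: v) = 0 := by
  apply List.count_eq_zero_of_not_mem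
  intro hm
  obtain ⟨l, _, hl⟩ := List.mem_map.1 hm
  exact h (List.cons.inj hl).1

theorem count_map_cons_nil (x : ABC) (L : List (List ABC)) :
    (L.map (List.cons x)).count [] = 0 := by
  apply List.count_eq_zero_of_not_mem
  simp

theorem scount_eq (w v : List ABC) : scount w v = rcount w v := by
  unfold scount
  rw [(List.sublists_perm_sublists' w).count_eq]
  induction w generalizing v with
  | nil => cases v <;> simp [rcount]
  | cons x w ih =>
    rw [List.sublists'_cons, List.count_append, ih]
    cases v with
    | nil => rw [count_map_cons_nil]; simp [rcount]
    | cons y v =>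
      rw [rcount]
      by_cases h : x = y
      · subst h
        rw [List.count_map_of_injective _ _ List.cons_injective, ih]
        simp
      · rw [count_map_cons_ne x y h, if_neg h]

theorem stmt_18 :
    (∀ i : ℕ, i ≤ 5 →
      MEq3 ([a] ++ B 11 ++ [c, b, a, b, c] ++ B 5) (fam i)) ∧
    (∀ i j : ℕ, i ≤ 5 → j ≤ 5 → i ≠ j → 7 ≤ dH (fam i) (fam j)) := by
  constructor
  · intro i hi
    unfold MEq3
    simp only [scount_eq]
    interval_cases i <;> simp [fam, rcount, List.replicate_succ]
  · intro i j hi hj hij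
    interval_cases i <;> interval_cases j <;> first | exact absurd rfl hij | decide
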